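/- (Dual invariance) Let λ and μ be dominant integral weights (⟨ν,α^∨⟩ ∈ ℤ_{≥0} for all α ∈ Δ) with Φ_λ = Φ_J and Φ_μ = Φ_I for subsets I, J ⊆ Δ. Then for all x, y ∈ ᴵWᴶ (so that xλ, yλ ∈ Λ_I⁺ and x^{−1}μ, y^{−1}μ ∈ Λ_J⁺): c̃(xλ, yλ, Φ_I, Φ) = (−1)^{ℓ(x)+ℓ(y)+1} c̃(x^{−1}μ, y^{−1}μ, Φ_J, Φ). -/

import Mathlib

open scoped RealInnerProductSpace
open Classical

noncomputable section

namespace JantzenGVM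

variable {V : Type*} [NormedAddCommGroup V] [InnerProductSpace ℝ V] [FiniteDimensional ℝ V]

/-- The coroot `α^∨ = 2α/⟨α,α⟩` of a vector `α` (junk value `0` when `α = 0`). -/
def coroot (α : V) : V := (2 / ⟪α, α⟫) • α

/-- The linear functional `v ↦ ⟨v, α^∨⟩`. -/
def corootForm (α : V) : V →ₗ[ℝ] ℝ where
  toFun v := ⟪v, coroot α⟫
  map_add' x y := by simp [inner_add_left]
  map_smul' c x := by simp [inner_smul_left]

lemma corootForm_self {α : V} (h : ⟪α, α⟫ ≠ 0) : corootForm α α = 2 := by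
  simp only [corootForm, coroot, LinearMap.coe_mk, AddHom.coe_mk, real_inner_smul_right]
  field_simp

/-- The reflection `s_α` as a linear automorphism of `V` (the identity when `⟨α,α⟩ = 0`). -/
def reflV (α : V) : V ≃ₗ[ℝ] V :=
  if h : ⟪α, α⟫ = 0 then LinearEquiv.refl ℝ V
  else Module.reflection (corootForm_self h)

/-- `h* = ℂ ⊗ V`, realized as the space of real-linear functionals `V → ℂ` via the
inner product; an element `λ` pairs with a root `α` by `⟨λ, α⟩ = λ α` and with the
coroot by `⟨λ, α^∨⟩ = λ (coroot α)`. -/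
abbrev HStar (V : Type*) [NormedAddCommGroup V] [InnerProductSpace ℝ V] := V →ₗ[ℝ] ℂ

/-- The canonical embedding of `V` into `h*`. -/
def emb (α : V) : HStar V where
  toFun v := (⟪α, v⟫ : ℂ)
  map_add' x y := by simp [inner_add_right]
  map_smul' c x := by simp [inner_smul_right, Complex.real_smul]

/-- The action of a linear automorphism `w` of `V` on `h*`: `(w • λ)(v) = λ(w⁻¹ v)`. -/
def wAct (w : V ≃ₗ[ℝ] V) (l : HStar V) : HStar V := l ∘ₗ (w.symm : V →ₗ[ℝ] V)

/-- The reflection `s_β λ = λ - ⟨λ, β^∨⟩ β` acting on `h*`. -/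
def sRefl (β : V) (l : HStar V) : HStar V := l - l (coroot β) • emb β

/-- The group generated by the reflections in the elements of `Φ'`. -/
def weyl (Φ' : Set V) : Subgroup (V ≃ₗ[ℝ] V) :=
  Subgroup.closure {w | ∃ α ∈ Φ', w = reflV α}

/-- A finite, reduced, crystallographic root system spanning the Euclidean space `V`,
together with a choice of positive system and the corresponding simple system. -/
structure RootSys (V : Type*) [NormedAddCommGroup V] [InnerProductSpace ℝ V]
    [FiniteDimensional ℝ V] where
  Φ : Finset V
  pos : Finset V
  Δ : Finset V
  ne_zero : ∀ α ∈ Φ, α ≠ (0 : V)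
  span_eq_top : Submodule.span ℝ (Φ : Set V) = ⊤
  reduced : ∀ α ∈ Φ, ∀ c : ℝ, c • α ∈ Φ → c = 1 ∨ c = -1
  refl_mem : ∀ α ∈ Φ, ∀ β ∈ Φ, reflV α β ∈ Φ
  crystallographic : ∀ α ∈ Φ, ∀ β ∈ Φ, ∃ n : ℤ, ⟪β, coroot α⟫ = (n : ℝ)
  pos_subset : pos ⊆ Φ
  mem_pos_or : ∀ α ∈ Φ, α ∈ pos ∨ -α ∈ pos
  not_both : ∀ α ∈ pos, -α ∉ pos
  simple_subset : Δ ⊆ pos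
  simple_indep : LinearIndependent ℝ (fun x : {a : V // a ∈ Δ} => x.1)
  simple_gen : ∀ β ∈ pos, ∃ c : V → ℝ, (∀ α ∈ Δ, 0 ≤ c α) ∧ β = ∑ α ∈ Δ, c α • α

/-- A subsystem of the root system: a subset of `Φ` closed under its own reflections. -/
def IsSubsystem (S : RootSys V) (Φ' : Set V) : Prop :=
  Φ' ⊆ (S.Φ : Set V) ∧ ∀ α ∈ Φ', ∀ β ∈ Φ', reflV α β ∈ Φ'

/-- The length of `w`, i.e. the number of positive roots sent to negative roots
(this equals the Coxeter length for elements of the Weyl group). -/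
def len (S : RootSys V) (w : V ≃ₗ[ℝ] V) : ℕ :=
  {β ∈ (S.pos : Set V) | w β ∉ (S.pos : Set V)}.ncard

/-- `Φ_I = ℤI ∩ Φ`, the subsystem generated by a subset `I` of the simple roots. -/
def PhiI (S : RootSys V) (I : Finset V) : Set V :=
  {α ∈ (S.Φ : Set V) | α ∈ Submodule.span ℤ (I : Set V)}

/-- `z` is a positive integer. -/
def IsPosInt (z : ℂ) : Prop := ∃ n : ℤ, 0 < n ∧ z = (n : ℂ)

/-- `z` is an integer. -/
def IsInt (z : ℂ) : Prop := ∃ n : ℤ, z = (n : ℂ)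

/-- `Λ_I⁺ = {λ ∈ h* : ⟨λ, α^∨⟩ ∈ ℤ_{>0} for all α ∈ I}`. -/
def LambdaP (I : Set V) : Set (HStar V) :=
  {l | ∀ α ∈ I, IsPosInt (l (coroot α))}

/-- `Λ⁺(Φ'', Φ') = {ν ∈ ℂΦ' : ⟨ν, α^∨⟩ ∈ ℤ_{>0} for all α ∈ Φ'' ∩ Φ⁺}`. -/
def LambdaPSub (S : RootSys V) (Φ'' Φ' : Set V) : Set (HStar V) :=
  {l | l ∈ Submodule.span ℂ (emb '' Φ') ∧
       ∀ α ∈ Φ'' ∩ (S.pos : Set V), IsPosInt (l (coroot α))}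

/-- `λ` is `Φ''`-regular: `⟨λ, α⟩ ≠ 0` for all `α ∈ Φ''`. -/
def IsRegularOn (Φ'' : Set V) (l : HStar V) : Prop := ∀ α ∈ Φ'', l α ≠ 0

/-- `Ψ⁺(λ, Φ'', Φ') = {β ∈ (Φ' ∩ Φ⁺) \ Φ'' : ⟨λ, β^∨⟩ ∈ ℤ_{>0}}`. -/
def PsiP (S : RootSys V) (Φ'' Φ' : Set V) (l : HStar V) : Set V :=
  {β | β ∈ Φ' ∩ (S.pos : Set V) ∧ β ∉ Φ'' ∧ IsPosInt (l (coroot β))}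

/-- `Ψ⁺⁺(λ, Φ'', Φ') = {β ∈ Ψ⁺(λ, Φ'', Φ') : s_β λ is Φ''-regular}`. -/
def PsiPP (S : RootSys V) (Φ'' Φ' : Set V) (l : HStar V) : Set V :=
  {β ∈ PsiP S Φ'' Φ' l | ∀ α ∈ Φ'', (sRefl β l) α ≠ 0}

/-- The sign function: `sgn(λ, μ) = (-1)^{ℓ(w)}` if `λ, μ` are `Φ''`-regular and
`μ = wλ` for some `w ∈ W(Φ'')`, and `0` otherwise. -/
def sgnW (S : RootSys V) (Φ'' : Set V) (l m : HStar V) : ℤ :=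
  if h : IsRegularOn Φ'' l ∧ IsRegularOn Φ'' m ∧ ∃ w, w ∈ weyl Φ'' ∧ m = wAct w l
  then (-1) ^ len S h.2.2.choose else 0

/-- The Jantzen coefficient `c(λ, μ, Φ'', Φ') = Σ_{β ∈ Ψ⁺⁺(λ,Φ'',Φ')} sgn(s_β λ, μ)`. -/
def jc (S : RootSys V) (Φ'' Φ' : Set V) (l m : HStar V) : ℤ :=
  ∑ᶠ β ∈ PsiPP S Φ'' Φ' l, sgnW S Φ'' (sRefl β l) m

/-- The symmetrized Jantzen coefficient `c̃(λ, μ, Φ'', Φ')`. -/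
def jcSym (S : RootSys V) (Φ'' Φ' : Set V) (l m : HStar V) : ℤ :=
  jc S Φ'' Φ' l m + jc S Φ'' Φ' m l

/-- `θ(λ) = Σ_{w ∈ W_I} (-1)^{ℓ(w)} e^{wλ}` in the free `ℤ`-module on `h*`. -/
def theta (S : RootSys V) (I : Finset V) (l : HStar V) : HStar V →₀ ℤ :=
  ∑ᶠ w ∈ (weyl (PhiI S I) : Set (V ≃ₗ[ℝ] V)),
    Finsupp.single (wAct w l) ((-1) ^ len S w)

/-- `Φ_λ = {α ∈ Φ : ⟨λ, α⟩ = 0}`. -/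
def singSet (S : RootSys V) (l : HStar V) : Set V :=
  {α ∈ (S.Φ : Set V) | l α = 0}

/-- `Φ_{[λ]} = {α ∈ Φ : ⟨λ, α^∨⟩ ∈ ℤ}`. -/
def integralSet (S : RootSys V) (l : HStar V) : Set V :=
  {α ∈ (S.Φ : Set V) | IsInt (l (coroot α))}

/-- `(ℚ A) ∩ Φ`, the intersection of the rational span of `A` with `Φ`.
Taking `A = Φ_I ∪ {β}` gives `Φ_{β,1}`; taking `A = Φ_λ ∪ {β}` gives `Φ_{β,2}`. -/
def ratSpanRoots (S : RootSys V) (A : Set V) : Set V :=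
  {γ ∈ (S.Φ : Set V) | ∃ (t : Finset V) (c : V → ℚ),
    (t : Set V) ⊆ A ∧ γ = ∑ α ∈ t, (c α : ℝ) • α}

/-- `Φ_{β,0}`, the irreducible component of `Φ` containing `β`. -/
def component (S : RootSys V) (β : V) : Set V :=
  {γ ∈ (S.Φ : Set V) |
    Relation.ReflTransGen
      (fun x y => x ∈ (S.Φ : Set V) ∧ y ∈ (S.Φ : Set V) ∧ ⟪x, y⟫ ≠ 0) β γ}

/-- `λ|_{Φ'}`: the unique element of `ℂΦ'` with `⟨λ|_{Φ'}, α^∨⟩ = ⟨λ, α^∨⟩`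
for all `α ∈ Φ'`. -/
def restrictW (Φ' : Set V) (l : HStar V) : HStar V :=
  letI : Nonempty (HStar V) := ⟨0⟩
  Classical.epsilon fun m =>
    m ∈ Submodule.span ℂ (emb '' Φ') ∧ ∀ α ∈ Φ', m (coroot α) = l (coroot α)

/-- `ᴵWᴶ = {w ∈ W : ℓ(uwv) = ℓ(u) + ℓ(w) + ℓ(v) for all u ∈ W_I, v ∈ W_J}`. -/
def doubleCoset (S : RootSys V) (I J : Finset V) : Set (V ≃ₗ[ℝ] V) :=
  {w | w ∈ weyl (S.Φ : Set V) ∧ ∀ u ∈ weyl (PhiI S I), ∀ v ∈ weyl (PhiI S J),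
    len S (u * w * v) = len S u + len S w + len S v}

/-- The fundamental weight `ϖ_j` relative to an enumeration `e` of the simple roots:
the unique element of `h*` with `⟨ϖ_j, α_k^∨⟩ = δ_{jk}`. -/
def fundWeight {n : ℕ} (e : Fin n → V) (j : Fin n) : HStar V :=
  letI : Nonempty (HStar V) := ⟨0⟩
  Classical.epsilon fun m => ∀ k : Fin n, m (coroot (e k)) = if k = j then 1 else 0

/-- The labels of the irreducible Dynkin types. -/
inductive LieType | A | B | C | D | E | F | G
deriving DecidableEq

/-- The Cartan matrix of type `A_n` (1-based indices): entry `(i,j)` is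
`⟨α_i, α_j^∨⟩`. -/
def cartanA (i j : ℕ) : ℤ :=
  if i = j then 2 else if i + 1 = j ∨ j + 1 = i then -1 else 0

/-- The Cartan matrices of the irreducible types in the standard (Bourbaki/Humphreys)
numbering of the Dynkin diagram: `cartanEntry t n i j = ⟨α_i, α_j^∨⟩` (1-based). -/
def cartanEntry : LieType → ℕ → ℕ → ℕ → ℤ
  | .A, _, i, j => cartanA i j
  | .B, n, i, j => if i + 1 = n ∧ j = n then -2 else cartanA i j
  | .C, n, i, j => if i = n ∧ j + 1 = n then -2 else cartanA i j
  | .D, n, i, j =>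
      if i = j then 2
      else if (i + 2 = n ∧ j = n) ∨ (i = n ∧ j + 2 = n) then -1
      else if (i + 1 = n ∧ j = n) ∨ (i = n ∧ j + 1 = n) then 0
      else cartanA i j
  | .E, _, i, j =>
      if i = j then 2
      else if (i = 1 ∧ j = 3) ∨ (i = 3 ∧ j = 1) ∨ (i = 2 ∧ j = 4) ∨ (i = 4 ∧ j = 2) then -1
      else if (i = 1 ∧ j = 2) ∨ (i = 2 ∧ j = 1) ∨ (i = 2 ∧ j = 3) ∨ (i = 3 ∧ j = 2) then 0
      else cartanA i j
  | .F, _, i, j => if i = 2 ∧ j = 3 then -2 else cartanA i j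
  | .G, _, i, j => if i = 2 ∧ j = 1 then -3 else cartanA i j

/-- The standard basis vector `e_k` (1-based index, junk `0` outside `1 ≤ k ≤ n`). -/
def stdE (n k : ℕ) : EuclideanSpace ℝ (Fin n) :=
  if h : 1 ≤ k ∧ k ≤ n then EuclideanSpace.single ⟨k - 1, by omega⟩ 1 else 0

/-- The labels `B`, `C`, `D` of the classical non-`A` types. -/
inductive BCD | B | C | D
deriving DecidableEq

/-- The root set of `B_n` / `C_n` / `D_n` in the standard realization. -/
def bcdRoots (t : BCD) (n : ℕ) : Set (EuclideanSpace ℝ (Fin n)) :=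
  {v | (∃ i j : ℕ, 1 ≤ i ∧ i < j ∧ j ≤ n ∧
          (v = stdE n i - stdE n j ∨ v = -(stdE n i - stdE n j) ∨
           v = stdE n i + stdE n j ∨ v = -(stdE n i + stdE n j))) ∨
       (match t with
        | .B => ∃ i : ℕ, 1 ≤ i ∧ i ≤ n ∧ (v = stdE n i ∨ v = -stdE n i)
        | .C => ∃ i : ℕ, 1 ≤ i ∧ i ≤ n ∧ (v = (2:ℝ) • stdE n i ∨ v = -((2:ℝ) • stdE n i))
        | .D => False)}

/-- The positive roots of `B_n` / `C_n` / `D_n` in the standard realization. -/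
def bcdPos (t : BCD) (n : ℕ) : Set (EuclideanSpace ℝ (Fin n)) :=
  {v | (∃ i j : ℕ, 1 ≤ i ∧ i < j ∧ j ≤ n ∧
          (v = stdE n i - stdE n j ∨ v = stdE n i + stdE n j)) ∨
       (match t with
        | .B => ∃ i : ℕ, 1 ≤ i ∧ i ≤ n ∧ v = stdE n i
        | .C => ∃ i : ℕ, 1 ≤ i ∧ i ≤ n ∧ v = (2:ℝ) • stdE n i
        | .D => False)}

/-- The simple roots of `B_n` / `C_n` / `D_n` in the standard realization. -/
def bcdSimple (t : BCD) (n : ℕ) : Set (EuclideanSpace ℝ (Fin n)) :=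
  {v | (∃ i : ℕ, 1 ≤ i ∧ i < n ∧ v = stdE n i - stdE n (i + 1)) ∨
       (match t with
        | .B => v = stdE n n
        | .C => v = (2:ℝ) • stdE n n
        | .D => v = stdE n (n - 1) + stdE n n)}

/-- The simple root `α_k` of `B_n` / `C_n` / `D_n` (1-based index `k`). -/
def bcdAlpha (t : BCD) (n k : ℕ) : EuclideanSpace ℝ (Fin n) :=
  if k < n then stdE n k - stdE n (k + 1)
  else match t with
  | .B => stdE n n
  | .C => (2:ℝ) • stdE n n
  | .D => stdE n (n - 1) + stdE n n


/-! ### Helper lemmas -/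

lemma reflV_apply {α : V} (h : α ≠ 0) (v : V) : reflV α v = v - ⟪v, coroot α⟫ • α := by
  have h' : ⟪α, α⟫ ≠ 0 := by simpa using h
  unfold reflV
  rw [dif_neg h', Module.reflection_apply]
  rfl

lemma inner_coroot (v α : V) : ⟪v, coroot α⟫ = 2 / ⟪α, α⟫ * ⟪v, α⟫ := by
  simp [coroot, real_inner_smul_right]

lemma inner_coroot_self {α : V} (h : α ≠ 0) : ⟪α, coroot α⟫ = 2 := by
  have h' : ⟪α, α⟫ ≠ 0 := by simpa using h
  rw [inner_coroot]
  field_simp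

lemma reflV_self {α : V} (h : α ≠ 0) : reflV α α = -α := by
  rw [reflV_apply h, inner_coroot_self h, two_smul]
  abel

lemma reflV_reflV {α : V} (h : α ≠ 0) (v : V) : reflV α (reflV α v) = v := by
  rw [reflV_apply h v, map_sub, map_smul, reflV_self h, reflV_apply h]
  simp

lemma reflV_mul_self {α : V} (h : α ≠ 0) : reflV α * reflV α = 1 := by
  ext v
  simpa using reflV_reflV h v

lemma reflV_inv {α : V} (h : α ≠ 0) : (reflV α)⁻¹ = reflV α :=
  inv_eq_of_mul_eq_one_left (reflV_mul_self h)

lemma reflV_inner {α : V} (h : α ≠ 0) (u v : V) : ⟪reflV α u, reflV α v⟫ = ⟪u, v⟫ := by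
  have h' : ⟪α, α⟫ ≠ 0 := by simpa using h
  rw [reflV_apply h, reflV_apply h]
  simp only [inner_sub_left, inner_sub_right, real_inner_smul_left, real_inner_smul_right,
    inner_coroot]
  rw [real_inner_comm α v]
  field_simp
  ring

/-- `w` preserves the inner product. -/
def Isom (w : V ≃ₗ[ℝ] V) : Prop := ∀ u v : V, ⟪w u, w v⟫ = ⟪u, v⟫

lemma inv_apply_self' (w : V ≃ₗ[ℝ] V) (v : V) : w⁻¹ (w v) = v := w.symm_apply_apply v

lemma apply_inv_self' (w : V ≃ₗ[ℝ] V) (v : V) : w (w⁻¹ v) = v := w.apply_symm_apply v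

lemma coroot_map {w : V ≃ₗ[ℝ] V} (hw : Isom w) (γ : V) : coroot (w γ) = w (coroot γ) := by
  rw [coroot, coroot, hw γ γ, map_smul]

lemma reflV_conj {w : V ≃ₗ[ℝ] V} (hw : Isom w) {γ : V} (h : γ ≠ 0) :
    reflV (w γ) = w * reflV γ * w⁻¹ := by
  have h' : w γ ≠ 0 := by simpa using h
  ext v
  obtain ⟨u, rfl⟩ := w.surjective v
  simp only [LinearEquiv.mul_apply]
  rw [inv_apply_self', reflV_apply h', reflV_apply h, coroot_map hw, hw, map_sub, map_smul]

lemma reflV_conj' {w : V ≃ₗ[ℝ] V} (hw : Isom w) {γ : V} (h : γ ≠ 0) :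
    reflV (w γ) * w = w * reflV γ := by
  rw [reflV_conj hw h]; group

lemma weyl_isom {Φ' : Set V} (h0 : ∀ α ∈ Φ', α ≠ 0) {w : V ≃ₗ[ℝ] V} (hw : w ∈ weyl Φ') :
    Isom w := by
  induction hw using Subgroup.closure_induction with
  | mem x hx =>
    obtain ⟨α, hα, rfl⟩ := hx
    exact fun u v => reflV_inner (h0 α hα) u v
  | one => exact fun u v => rfl
  | mul x y _ _ hx hy => exact fun u v => by simp [hx _ _, hy _ _]
  | inv x _ hx => exact fun u v => by rw [← hx, apply_inv_self', apply_inv_self']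

lemma wAct_apply (w : V ≃ₗ[ℝ] V) (l : HStar V) (v : V) : wAct w l v = l (w⁻¹ v) := rfl

lemma wAct_mul (w u : V ≃ₗ[ℝ] V) (l : HStar V) : wAct w (wAct u l) = wAct (w * u) l := by
  ext v
  simp [wAct_apply, mul_inv_rev]

lemma wAct_one (l : HStar V) : wAct 1 l = l := rfl

lemma sRefl_eq {β : V} (h : β ≠ 0) (l : HStar V) : sRefl β l = wAct (reflV β) l := by
  ext v
  rw [wAct_apply, reflV_inv h, reflV_apply h, map_sub, map_smul]
  simp only [sRefl, LinearMap.sub_apply, LinearMap.smul_apply, emb, LinearMap.coe_mk,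
    AddHom.coe_mk, coroot, map_smul, real_inner_smul_right]
  rw [real_inner_comm v β]
  simp
  ring

section RS
variable (S : RootSys V)

lemma weyl_refl_mem {Φ' : Set V} {α : V} (h : α ∈ Φ') : reflV α ∈ weyl Φ' :=
  Subgroup.subset_closure ⟨α, h, rfl⟩

lemma weyl_mono {A B : Set V} (h : A ⊆ B) : weyl A ≤ weyl B :=
  Subgroup.closure_mono fun _ ⟨α, hα, e⟩ => ⟨α, h hα, e⟩

lemma PhiI_sub (I : Finset V) : PhiI S I ⊆ (S.Φ : Set V) := fun _ h => h.1

/-- A set of roots closed under its reflections is closed under its reflection group. -/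
lemma weyl_map_mem {Φ' : Set V} (h0 : ∀ α ∈ Φ', α ≠ 0)
    (hc : ∀ α ∈ Φ', ∀ β ∈ Φ', reflV α β ∈ Φ')
    {w : V ≃ₗ[ℝ] V} (hw : w ∈ weyl Φ') : ∀ β, w β ∈ Φ' ↔ β ∈ Φ' := by
  induction hw using Subgroup.closure_induction with
  | mem x hx =>
    obtain ⟨α, hα, rfl⟩ := hx
    exact fun β => ⟨fun h => by simpa [reflV_reflV (h0 α hα)] using hc α hα _ h, hc α hα β⟩
  | one => exact fun β => Iff.rfl
  | mul x y _ _ hx hy => exact fun β => by rw [LinearEquiv.mul_apply, hx, hy]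
  | inv x _ hx => exact fun β => by rw [← hx, apply_inv_self']

lemma map_root {w : V ≃ₗ[ℝ] V} (hw : w ∈ weyl (S.Φ : Set V)) (β : V) : w β ∈ S.Φ ↔ β ∈ S.Φ :=
  weyl_map_mem (Φ' := (S.Φ : Set V)) S.ne_zero S.refl_mem hw β

lemma PhiI_refl (I : Finset V) : ∀ α ∈ PhiI S I, ∀ β ∈ PhiI S I, reflV α β ∈ PhiI S I := by
  intro α hα β hβ
  refine ⟨S.refl_mem α hα.1 β hβ.1, ?_⟩
  obtain ⟨n, hn⟩ := S.crystallographic α hα.1 β hβ.1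
  rw [reflV_apply (S.ne_zero α hα.1), hn, Int.cast_smul_eq_zsmul]
  exact Submodule.sub_mem _ hβ.2 (Submodule.smul_mem _ _ hα.2)

lemma neg_root {α : V} (h : α ∈ S.Φ) : -α ∈ S.Φ := by
  rw [← reflV_self (S.ne_zero α h)]
  exact S.refl_mem α h α h

lemma neg_pos_iff {α : V} (h : α ∈ S.Φ) : -α ∈ S.pos ↔ α ∉ S.pos := by
  constructor
  · intro h1 h2; exact S.not_both α h2 h1
  · intro h1; exact (S.mem_pos_or α h).resolve_left h1

lemma exists_fun (g : V → ℝ) : ∃ f : V →ₗ[ℝ] ℝ, ∀ a ∈ S.Δ, f a = g a := by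
  let b := Module.Basis.extend (S.simple_indep.linearIndepOn_id)
  refine ⟨b.constr ℝ fun i => g i, fun a ha => ?_⟩
  have hm : a ∈ (S.simple_indep.linearIndepOn_id).extend (Set.subset_univ _) :=
    LinearIndepOn.subset_extend _ _ ⟨⟨a, ha⟩, rfl⟩
  have := b.constr_basis ℝ (fun i => g i) ⟨a, hm⟩
  simpa [b, Module.Basis.extend_apply_self] using this

/-- A simple reflection permutes the positive roots other than its own. -/
lemma simple_refl_pos {a γ : V} (ha : a ∈ S.Δ) (hγ : γ ∈ S.pos) (hne : γ ≠ a) :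
    reflV a γ ∈ S.pos := by
  have haΦ := S.pos_subset (S.simple_subset ha)
  have hγΦ := S.pos_subset hγ
  by_contra hcon
  have hr : reflV a γ ∈ S.Φ := S.refl_mem a haΦ γ hγΦ
  have hneg : -(reflV a γ) ∈ S.pos := (neg_pos_iff S hr).2 hcon
  obtain ⟨c, hc0, hc⟩ := S.simple_gen _ hγ
  obtain ⟨d, hd0, hd⟩ := S.simple_gen _ hneg
  have key : ∀ b ∈ S.Δ, b ≠ a → c b = 0 := by
    intro b hb hba
    obtain ⟨f, hf⟩ := exists_fun S (fun v => if v = b then 1 else 0)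
    have e1 : f γ = c b := by
      rw [hc, map_sum, Finset.sum_eq_single b]
      · simp [hf b hb]
      · intro x hx hxb; simp [hf x hx, hxb]
      · exact fun h => absurd hb h
    have e2 : f (-(reflV a γ)) = d b := by
      rw [hd, map_sum, Finset.sum_eq_single b]
      · simp [hf b hb]
      · intro x hx hxb; simp [hf x hx, hxb]
      · exact fun h => absurd hb h
    rw [reflV_apply (S.ne_zero a haΦ), map_neg, map_sub, map_smul, hf a ha, e1] at e2
    simp [Ne.symm hba] at e2
    linarith [hc0 b hb, hd0 b hb]
  have e : γ = c a • a := by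
    conv_lhs => rw [hc]
    rw [Finset.sum_eq_single a]
    · intro x hx hxa; simp [key x hx hxa]
    · exact fun h => absurd ha h
  rcases S.reduced a haΦ (c a) (e ▸ hγΦ) with h | h
  · exact hne (by rw [e, h, one_smul])
  · have := hc0 a ha
    rw [h] at this
    linarith

lemma pos_induct (P : V → Prop) (h0 : ∀ a ∈ S.Δ, P a)
    (h1 : ∀ a ∈ S.Δ, ∀ γ ∈ S.pos, P γ → P (reflV a γ)) : ∀ γ ∈ S.pos, P γ := by
  by_contra! hcon
  obtain ⟨γ₀, hγ₀, hP₀⟩ := hcon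
  obtain ⟨ht, hht⟩ := exists_fun S (fun _ => 1)
  obtain ⟨γ, hγ, hmin⟩ := Finset.exists_min_image (S.pos.filter fun γ => ¬ P γ) ht
    ⟨γ₀, by simp [hγ₀, hP₀]⟩
  simp only [Finset.mem_filter] at hγ hmin
  obtain ⟨hγ, hP⟩ := hγ
  have hγΦ := S.pos_subset hγ
  obtain ⟨c, hc0, hc⟩ := S.simple_gen _ hγ
  have hpos : 0 < ⟪γ, γ⟫ := by
    rw [real_inner_self_pos]; exact S.ne_zero γ hγΦ
  have : ∃ a ∈ S.Δ, 0 < ⟪γ, a⟫ := by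
    by_contra! hneg
    have : ⟪γ, γ⟫ ≤ 0 := by
      have e : ⟪γ, γ⟫ = ⟪γ, ∑ α ∈ S.Δ, c α • α⟫ := by rw [← hc]
      rw [e, inner_sum]
      apply Finset.sum_nonpos
      intro a ha
      rw [real_inner_smul_right]
      exact mul_nonpos_of_nonneg_of_nonpos (hc0 a ha) (hneg a ha)
    linarith
  obtain ⟨a, ha, hpa⟩ := this
  have haΦ := S.pos_subset (S.simple_subset ha)
  have ha0 := S.ne_zero a haΦ
  have hne : γ ≠ a := fun h => hP (h ▸ h0 a ha)
  have hr := simple_refl_pos S ha hγ hne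
  by_cases hPr : P (reflV a γ)
  · exact hP (by simpa [reflV_reflV ha0] using h1 a ha _ hr hPr)
  · have h2 := hmin _ ⟨hr, hPr⟩
    rw [reflV_apply ha0, map_sub, map_smul, hht a ha, inner_coroot] at h2
    have : 0 < 2 / ⟪a, a⟫ * ⟪γ, a⟫ := by
      have : 0 < ⟪a, a⟫ := by rw [real_inner_self_pos]; exact ha0
      positivity
    rw [smul_eq_mul, mul_one] at h2
    linarith

/-- Product of the simple reflections of a word. -/
def word (L : List V) : V ≃ₗ[ℝ] V := (L.map reflV).prod

lemma word_append (L M : List V) : word (L ++ M) = word L * word M := by simp [word]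

lemma simple_ne {a : V} (ha : a ∈ S.Δ) : a ≠ 0 := S.ne_zero a (S.pos_subset (S.simple_subset ha))

lemma word_mem (L : List V) (hL : ∀ a ∈ L, a ∈ S.Δ) : word L ∈ weyl (S.Φ : Set V) := by
  induction L with
  | nil => exact one_mem _
  | cons a L ih =>
    simp only [List.mem_cons, forall_eq_or_imp] at hL
    have : word (a :: L) = reflV a * word L := by simp [word]
    rw [this]
    exact mul_mem (weyl_refl_mem (S.pos_subset (S.simple_subset hL.1))) (ih hL.2)

lemma word_inv (L : List V) (hL : ∀ a ∈ L, a ∈ S.Δ) : (word L)⁻¹ = word L.reverse := by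
  induction L with
  | nil => simp [word]
  | cons a L ih =>
    simp only [List.mem_cons, forall_eq_or_imp] at hL
    have : word (a :: L) = reflV a * word L := by simp [word]
    rw [this, mul_inv_rev, ih hL.2, List.reverse_cons, word_append,
      reflV_inv (simple_ne S hL.1)]
    simp [word]

lemma root_word (γ : V) (hγ : γ ∈ S.pos) :
    ∃ L : List V, (∀ a ∈ L, a ∈ S.Δ) ∧ ∃ a ∈ S.Δ, γ = word L a := by
  refine pos_induct S (fun γ => ∃ L : List V, (∀ a ∈ L, a ∈ S.Δ) ∧ ∃ a ∈ S.Δ, γ = word L a)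
    ?_ ?_ γ hγ
  · exact fun a ha => ⟨[], by simp, a, ha, rfl⟩
  · rintro b hb γ _ ⟨L, hL, a, ha, rfl⟩
    refine ⟨b :: L, ?_, a, ha, by simp [word]⟩
    simp only [List.mem_cons, forall_eq_or_imp]
    exact ⟨hb, hL⟩

lemma reflV_neg (α : V) : reflV (-α) = reflV α := by
  by_cases h : α = 0
  · simp [h]
  · ext v
    rw [reflV_apply h, reflV_apply (neg_ne_zero.2 h)]
    simp [coroot]

/-- Every reflection is conjugate to a simple one. -/
lemma refl_word (γ : V) (hγ : γ ∈ S.Φ) : ∃ L : List V, (∀ a ∈ L, a ∈ S.Δ) ∧ ∃ a ∈ S.Δ,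
    reflV γ = word (L ++ [a] ++ L.reverse) := by
  have main : ∀ γ ∈ S.pos, ∃ L : List V, (∀ a ∈ L, a ∈ S.Δ) ∧ ∃ a ∈ S.Δ,
      reflV γ = word (L ++ [a] ++ L.reverse) := by
    intro γ hγ
    obtain ⟨L, hL, a, ha, rfl⟩ := root_word S γ hγ
    refine ⟨L, hL, a, ha, ?_⟩
    rw [reflV_conj (weyl_isom (fun α h => S.ne_zero α h) (word_mem S L hL)) (simple_ne S ha),
      word_append, word_append, word_inv S L hL]
    simp [word]
  rcases S.mem_pos_or γ hγ with h | h
  · exact main γ h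
  · rw [← reflV_neg]; exact main _ h

lemma weyl_word {w : V ≃ₗ[ℝ] V} (hw : w ∈ weyl (S.Φ : Set V)) :
    ∃ L : List V, (∀ a ∈ L, a ∈ S.Δ) ∧ w = word L := by
  induction hw using Subgroup.closure_induction with
  | mem x hx =>
    obtain ⟨α, hα, rfl⟩ := hx
    obtain ⟨L, hL, a, ha, e⟩ := refl_word S α hα
    refine ⟨_, ?_, e⟩
    intro b hb
    simp at hb
    rcases hb with h | rfl | h
    exacts [hL _ h, ha, hL _ h]
  | one => exact ⟨[], by simp, rfl⟩
  | mul x y _ _ hx hy =>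
    obtain ⟨L, hL, rfl⟩ := hx
    obtain ⟨M, hM, rfl⟩ := hy
    refine ⟨L ++ M, ?_, (word_append _ _).symm⟩
    intro b hb
    rcases List.mem_append.1 hb with h | h
    exacts [hL _ h, hM _ h]
  | inv x _ hx =>
    obtain ⟨L, hL, rfl⟩ := hx
    exact ⟨L.reverse, by simpa using hL, word_inv S L hL⟩

/-- Exchange condition. -/
lemma exchange (L : List V) (hL : ∀ a ∈ L, a ∈ S.Δ) {α : V} (hα : α ∈ S.Δ)
    (hneg : word L α ∉ S.pos) :
    ∃ L' : List V, (∀ a ∈ L', a ∈ S.Δ) ∧ L'.length + 1 = L.length ∧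
      word L = word L' * reflV α := by
  induction L with
  | nil => exact absurd (S.simple_subset hα) hneg
  | cons a L ih =>
    simp only [List.mem_cons, forall_eq_or_imp] at hL
    have hw : word (a :: L) = reflV a * word L := by simp [word]
    by_cases h : word L α ∈ S.pos
    · have e : word L α = a := by
        by_contra hne
        exact hneg (by rw [hw]; exact simple_refl_pos S hL.1 h hne)
      refine ⟨L, hL.2, rfl, ?_⟩
      have := reflV_conj' (weyl_isom (fun α h => S.ne_zero α h) (word_mem S L hL.2))
        (simple_ne S hα)
      rw [hw, ← this, e]
    · obtain ⟨L', hL', hl, e⟩ := ih hL.2 h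
      refine ⟨a :: L', ?_, by simp [hl], ?_⟩
      · simp only [List.mem_cons, forall_eq_or_imp]
        exact ⟨hL.1, hL'⟩
      · rw [hw, e]; simp [word, mul_assoc]

/-! Dominant weights -/

lemma coroot_refl {a γ : V} (ha : a ≠ 0) :
    coroot (reflV a γ) = coroot γ - ⟪a, coroot γ⟫ • coroot a := by
  rw [coroot_map (fun u v => reflV_inner ha u v), reflV_apply ha, inner_coroot, coroot, coroot,
    real_inner_smul_right, real_inner_smul_left, smul_smul, real_inner_comm a γ]
  congr 2
  ring

lemma dom_pos (l : HStar V)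
    (hl : ∀ α ∈ S.Δ, ∃ n : ℤ, 0 ≤ n ∧ l (coroot α) = (n : ℂ)) {γ : V} (hγ : γ ∈ S.pos) :
    ∃ n : ℤ, 0 ≤ n ∧ l (coroot γ) = (n : ℂ) := by
  have h1 : ∀ γ ∈ S.pos, ∃ n : ℤ, l (coroot γ) = (n : ℂ) := by
    intro γ hγ
    have := pos_induct S (fun γ => γ ∈ S.Φ ∧ ∃ n : ℤ, l (coroot γ) = (n : ℂ)) ?_ ?_ γ hγ
    · exact this.2
    · intro a ha
      obtain ⟨n, _, hn⟩ := hl a ha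
      exact ⟨S.pos_subset (S.simple_subset ha), n, hn⟩
    · rintro a ha γ hγ ⟨hγΦ, n, hn⟩
      obtain ⟨m, _, hm⟩ := hl a ha
      have haΦ := S.pos_subset (S.simple_subset ha)
      obtain ⟨k, hk⟩ := S.crystallographic γ hγΦ a haΦ
      refine ⟨S.refl_mem a haΦ γ hγΦ, n - k * m, ?_⟩
      rw [coroot_refl (simple_ne S ha), map_sub, map_smul, hn, hm, hk]
      simp
  have h2 : ∃ r : ℝ, 0 ≤ r ∧ l (coroot γ) = (r : ℂ) := by
    obtain ⟨c, hc0, hc⟩ := S.simple_gen γ hγ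
    have h3 : ∀ a ∈ S.Δ, ∃ r : ℝ, 0 ≤ r ∧ l a = (r : ℂ) := by
      intro a ha
      obtain ⟨n, hn0, hn⟩ := hl a ha
      have hp : 0 < ⟪a, a⟫ := by rw [real_inner_self_pos]; exact simple_ne S ha
      refine ⟨⟪a, a⟫ / 2 * n, by positivity, ?_⟩
      have e : a = (⟪a, a⟫ / 2) • coroot a := by
        rw [coroot, smul_smul]
        field_simp
        simp
      conv_lhs => rw [e]
      rw [map_smul, hn]
      simp
    choose! r hr0 hr using h3
    have hp : 0 < ⟪γ, γ⟫ := by rw [real_inner_self_pos]; exact S.ne_zero γ (S.pos_subset hγ)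
    refine ⟨2 / ⟪γ, γ⟫ * ∑ a ∈ S.Δ, c a * r a, ?_, ?_⟩
    · have : 0 ≤ ∑ a ∈ S.Δ, c a * r a :=
        Finset.sum_nonneg fun a ha => mul_nonneg (hc0 a ha) (hr0 a ha)
      positivity
    · have e : l γ = ((∑ a ∈ S.Δ, c a * r a : ℝ) : ℂ) := by
        conv_lhs => rw [hc]
        rw [map_sum]
        push_cast
        apply Finset.sum_congr rfl
        intro a ha
        rw [map_smul, hr a ha]; simp
      rw [coroot, map_smul, e]
      simp
  obtain ⟨n, hn⟩ := h1 γ hγ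
  obtain ⟨r, hr0, hr⟩ := h2
  refine ⟨n, ?_, hn⟩
  rw [hn] at hr
  have : (n : ℝ) = r := by exact_mod_cast hr
  have : (0 : ℝ) ≤ n := by rw [this]; exact hr0
  exact_mod_cast this

lemma l_coroot_zero (l : HStar V) {γ : V} (h : γ ≠ 0) : l (coroot γ) = 0 ↔ l γ = 0 := by
  rw [coroot, map_smul]
  simp [h]

lemma coroot_neg (γ : V) : coroot (-γ) = -coroot γ := by simp [coroot]

lemma posInt_iff (l : HStar V) (J : Finset V)
    (hl : ∀ α ∈ S.Δ, ∃ n : ℤ, 0 ≤ n ∧ l (coroot α) = (n : ℂ))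
    (hJ : singSet S l = PhiI S J) {γ : V} (hγ : γ ∈ S.Φ) :
    IsPosInt (l (coroot γ)) ↔ γ ∈ S.pos ∧ γ ∉ PhiI S J := by
  rw [← hJ]
  have hz := l_coroot_zero l (S.ne_zero γ hγ)
  constructor
  · rintro ⟨n, hn0, hn⟩
    constructor
    · by_contra h
      obtain ⟨m, hm0, hm⟩ := dom_pos S l hl ((neg_pos_iff S hγ).2 h)
      rw [coroot_neg, map_neg, hn] at hm
      have : -n = m := by exact_mod_cast hm
      omega
    · rintro ⟨_, h⟩
      rw [← hz, hn] at h
      have : n = 0 := by exact_mod_cast h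
      omega
  · rintro ⟨h1, h2⟩
    obtain ⟨m, hm0, hm⟩ := dom_pos S l hl h1
    refine ⟨m, lt_of_le_of_ne hm0 ?_, hm⟩
    rintro rfl
    exact h2 ⟨hγ, hz.1 (by simpa using hm)⟩

/-- The stabilizer of a dominant weight is the parabolic subgroup. -/
lemma stab (l : HStar V) (J : Finset V)
    (hl : ∀ α ∈ S.Δ, ∃ n : ℤ, 0 ≤ n ∧ l (coroot α) = (n : ℂ))
    (hJ : singSet S l = PhiI S J) {w : V ≃ₗ[ℝ] V} (hw : w ∈ weyl (S.Φ : Set V))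
    (hfix : wAct w l = l) : w ∈ weyl (PhiI S J) := by
  obtain ⟨L, hL, rfl⟩ := weyl_word S hw
  clear hw
  induction hn : L.length using Nat.strong_induction_on generalizing L with
  | _ n ih =>
  rcases List.eq_nil_or_concat L with rfl | ⟨M, a, rfl⟩
  · exact one_mem _
  · simp only [List.concat_eq_append] at *
    have hM : ∀ b ∈ M, b ∈ S.Δ := fun b hb => hL b (by simp [hb])
    have ha : a ∈ S.Δ := hL a (by simp)
    have ha0 := simple_ne S ha
    have haΦ := S.pos_subset (S.simple_subset ha)
    have hw : word (M ++ [a]) = word M * reflV a := by rw [word_append]; simp [word]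
    simp only [List.length_append, List.length_singleton] at hn
    by_cases h : word M a ∈ S.pos
    · have hisom := weyl_isom (fun α h => S.ne_zero α h) (word_mem S _ hL)
      have hz : l a = 0 := by
        obtain ⟨n1, hn1, e1⟩ := hl a ha
        obtain ⟨n2, hn2, e2⟩ := dom_pos S l hl h
        have e3 : l (coroot (word (M ++ [a]) a)) = l (coroot a) := by
          rw [coroot_map hisom]
          conv_lhs => rw [← hfix]
          rw [wAct_apply, inv_apply_self']
        have e4 : word (M ++ [a]) a = - word M a := by
          rw [hw, LinearEquiv.mul_apply, reflV_self ha0, map_neg]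
        rw [e4, coroot_neg, map_neg, e2, e1] at e3
        have : -n2 = n1 := by exact_mod_cast e3
        have : n1 = 0 := by omega
        rw [← l_coroot_zero l ha0, e1, this]; simp
      have hfa : wAct (reflV a) l = l := by
        rw [← sRefl_eq ha0]
        simp [sRefl, (l_coroot_zero l ha0).2 hz]
      have haJ : a ∈ PhiI S J := by rw [← hJ]; exact ⟨haΦ, hz⟩
      have hfM : wAct (word M) l = l := by
        rw [hw, ← wAct_mul, hfa] at hfix; exact hfix
      rw [hw]
      exact mul_mem (ih _ (by omega) M hM hfM rfl) (weyl_refl_mem haJ)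
    · obtain ⟨M', hM', hl', e⟩ := exchange S M hM ha h
      have e2 : word (M ++ [a]) = word M' := by
        rw [hw, e, mul_assoc, reflV_mul_self ha0, mul_one]
      rw [e2] at hfix ⊢
      exact ih _ (by omega) M' hM' hfix rfl

/-! Signs -/

/-- The sign of `w`. -/
def sg (w : V ≃ₗ[ℝ] V) : ℤ := (-1) ^ len S w

lemma sg_eq_prod (w : V ≃ₗ[ℝ] V) : sg S w = ∏ β ∈ S.pos, if w β ∈ S.pos then (1 : ℤ) else -1 := by
  have : {β ∈ (S.pos : Set V) | w β ∉ (S.pos : Set V)} =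
      ((S.pos.filter fun β => w β ∉ S.pos : Finset V) : Set V) := by ext; simp
  rw [sg, len, this, Set.ncard_coe_finset, Finset.prod_ite]
  simp

lemma sg_mul_refl {w : V ≃ₗ[ℝ] V} (hw : w ∈ weyl (S.Φ : Set V)) {a : V} (ha : a ∈ S.Δ) :
    sg S (w * reflV a) = - sg S w := by
  have hap := S.simple_subset ha
  have ha0 := simple_ne S ha
  rw [sg_eq_prod, sg_eq_prod, ← Finset.mul_prod_erase _ _ hap, ← Finset.mul_prod_erase _ _ hap,
    ← neg_mul]
  have e : (∏ β ∈ S.pos.erase a, if (w * reflV a) β ∈ S.pos then (1 : ℤ) else -1) =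
      ∏ β ∈ S.pos.erase a, if w β ∈ S.pos then (1 : ℤ) else -1 := by
    have hm : ∀ β ∈ S.pos.erase a, reflV a β ∈ S.pos.erase a := by
      intro β hβ
      rw [Finset.mem_erase] at hβ ⊢
      refine ⟨?_, simple_refl_pos S ha hβ.2 hβ.1⟩
      intro h
      have : β = -a := by rw [← reflV_reflV ha0 β, h, reflV_self ha0]
      exact S.not_both a hap (this ▸ hβ.2)
    refine Finset.prod_bij' (fun β _ => reflV a β) (fun β _ => reflV a β) hm hm ?_ ?_ ?_
    · intro β _; exact reflV_reflV ha0 β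
    · intro β _; exact reflV_reflV ha0 β
    · intro β _; rfl
  rw [e]
  congr 1
  have hwa : w a ∈ S.Φ := (map_root S hw a).2 (S.pos_subset hap)
  rw [LinearEquiv.mul_apply, reflV_self ha0, map_neg]
  simp only [neg_pos_iff S hwa]
  by_cases h : w a ∈ S.pos <;> simp [h]

lemma sg_one : sg S (1 : V ≃ₗ[ℝ] V) = 1 := by
  rw [sg_eq_prod]
  apply Finset.prod_eq_one
  intro β hβ
  simp [hβ]

lemma sg_mul_word {w : V ≃ₗ[ℝ] V} (hw : w ∈ weyl (S.Φ : Set V)) (L : List V)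
    (hL : ∀ a ∈ L, a ∈ S.Δ) : sg S (w * word L) = sg S w * (-1) ^ L.length := by
  induction L generalizing w with
  | nil => simp [word]
  | cons a L ih =>
    simp only [List.mem_cons, forall_eq_or_imp] at hL
    have : word (a :: L) = reflV a * word L := by simp [word]
    have haΦ := S.pos_subset (S.simple_subset hL.1)
    rw [this, ← mul_assoc, ih (mul_mem hw (weyl_refl_mem haΦ)) hL.2, sg_mul_refl S hw hL.1,
      List.length_cons, pow_succ]
    ring

lemma sg_word (L : List V) (hL : ∀ a ∈ L, a ∈ S.Δ) : sg S (word L) = (-1) ^ L.length := by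
  have := sg_mul_word S (one_mem _) L hL
  rwa [one_mul, sg_one, one_mul] at this

lemma sg_mul {w u : V ≃ₗ[ℝ] V} (hw : w ∈ weyl (S.Φ : Set V)) (hu : u ∈ weyl (S.Φ : Set V)) :
    sg S (w * u) = sg S w * sg S u := by
  obtain ⟨L, hL, rfl⟩ := weyl_word S hu
  rw [sg_mul_word S hw L hL, sg_word S L hL]

lemma sg_refl {γ : V} (hγ : γ ∈ S.Φ) : sg S (reflV γ) = -1 := by
  obtain ⟨L, hL, a, ha, e⟩ := refl_word S γ hγ
  rw [e, sg_word]
  · simp only [List.length_append, List.length_singleton, List.length_reverse]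
    rw [show L.length + 1 + L.length = 2 * L.length + 1 by ring, pow_succ, pow_mul]
    simp
  · intro b hb
    simp at hb
    rcases hb with h | rfl | h
    exacts [hL _ h, ha, hL _ h]

lemma sg_sq (w : V ≃ₗ[ℝ] V) : sg S w * sg S w = 1 := by
  rw [sg, ← mul_pow]; simp

lemma len_refl_ne {α : V} (h : α ∈ S.Φ) : len S (reflV α) ≠ 0 := by
  intro h0
  have := sg_refl S h
  rw [sg, h0] at this
  norm_num at this

/-- Double coset representatives give regular weights. -/
lemma dc_regular {I J : Finset V} {l : HStar V} (hJ : singSet S l = PhiI S J)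
    {y : V ≃ₗ[ℝ] V} (hy : y ∈ doubleCoset S I J) : IsRegularOn (PhiI S I) (wAct y l) := by
  intro α hα h0
  rw [wAct_apply] at h0
  have hαΦ : α ∈ S.Φ := hα.1
  have hyi := inv_mem hy.1
  have hγΦ : y⁻¹ α ∈ S.Φ := (map_root S hyi α).2 hαΦ
  have hγJ : y⁻¹ α ∈ PhiI S J := by rw [← hJ]; exact ⟨hγΦ, h0⟩
  have e := reflV_conj' (weyl_isom (fun α h => S.ne_zero α h) hy.1) (S.ne_zero _ hγΦ)
  rw [apply_inv_self'] at e
  have h1 := hy.2 _ (weyl_refl_mem hα) _ (weyl_refl_mem hγJ)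
  rw [e, mul_assoc, reflV_mul_self (S.ne_zero _ hγΦ), mul_one] at h1
  have := len_refl_ne S hαΦ
  omega

lemma dc_inv_len {w : V ≃ₗ[ℝ] V} (hw : w ∈ weyl (S.Φ : Set V)) : len S w⁻¹ = len S w := by
  have hwi := inv_mem hw
  have key : ∀ w : V ≃ₗ[ℝ] V, w ∈ weyl (S.Φ : Set V) → ∀ β ∈ S.pos, w β ∉ S.pos →
      -(w β) ∈ S.pos ∧ w⁻¹ (-(w β)) ∉ S.pos := by
    intro w hw β hβ h
    refine ⟨(neg_pos_iff S ((map_root S hw β).2 (S.pos_subset hβ))).2 h, ?_⟩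
    rw [map_neg, inv_apply_self']
    exact S.not_both β hβ
  unfold len
  symm
  refine Set.ncard_congr (fun β _ => -(w β)) ?_ ?_ ?_
  · rintro β ⟨hβ, h⟩; exact key w hw β hβ h
  · intro a b _ _ h; simpa using h
  · rintro β ⟨hβ, h⟩
    have := key _ hwi β hβ h
    rw [inv_inv] at this
    exact ⟨_, this, by rw [map_neg, apply_inv_self', neg_neg]⟩

lemma dc_inv {I J : Finset V} {y : V ≃ₗ[ℝ] V} (hy : y ∈ doubleCoset S I J) :
    y⁻¹ ∈ doubleCoset S J I := by
  refine ⟨inv_mem hy.1, fun u hu v hv => ?_⟩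
  have hu' := weyl_mono (PhiI_sub S J) hu
  have hv' := weyl_mono (PhiI_sub S I) hv
  have h := hy.2 _ (inv_mem hv) _ (inv_mem hu)
  have e : u * y⁻¹ * v = (v⁻¹ * y * u⁻¹)⁻¹ := by group
  rw [e, dc_inv_len S (mul_mem (mul_mem (inv_mem hv') hy.1) (inv_mem hu')), h,
    dc_inv_len S hv', dc_inv_len S hu', dc_inv_len S hy.1]
  ring

lemma sg_unique {I J : Finset V} {y w w0 v v0 z : V ≃ₗ[ℝ] V} (hy : y ∈ doubleCoset S I J)
    (hw : w ∈ weyl (PhiI S I)) (hw0 : w0 ∈ weyl (PhiI S I))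
    (hv : v ∈ weyl (PhiI S J)) (hv0 : v0 ∈ weyl (PhiI S J))
    (h : w * z = y * v) (h0 : w0 * z = y * v0) : sg S w = sg S w0 := by
  have e : (w * w0⁻¹) * y * (v0 * v⁻¹) = y := by
    have : w * w0⁻¹ * (w0 * z) * v⁻¹ = y := by
      rw [show w * w0⁻¹ * (w0 * z) * v⁻¹ = (w * z) * v⁻¹ by group, h]; group
    rw [h0] at this
    calc _ = w * w0⁻¹ * (y * v0) * v⁻¹ := by group
      _ = y := this
  have h1 := hy.2 _ (mul_mem hw (inv_mem hw0)) _ (mul_mem hv0 (inv_mem hv))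
  rw [e] at h1
  have h2 : sg S (w * w0⁻¹) = 1 := by
    rw [sg, show len S (w * w0⁻¹) = 0 by omega, pow_zero]
  have hw' := weyl_mono (PhiI_sub S I) hw
  have hw0' := weyl_mono (PhiI_sub S I) hw0
  have h3 : w = (w * w0⁻¹) * w0 := by group
  rw [h3, sg_mul S (mul_mem hw' (inv_mem hw0')) hw0', h2, one_mul]

lemma regular_of_eq {I : Finset V} {w : V ≃ₗ[ℝ] V} {l m : HStar V} (hw : w ∈ weyl (PhiI S I))
    (h : m = wAct w l) (hm : IsRegularOn (PhiI S I) m) : IsRegularOn (PhiI S I) l := by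
  intro α hα h0
  have h1 := hm (w α) ((weyl_map_mem (fun α h => S.ne_zero α h.1) (PhiI_refl S I) hw α).2 hα)
  rw [h, wAct_apply, inv_apply_self'] at h1
  exact h1 h0

/-- Values of the sign function on the relevant weights. -/
lemma sgnW_spec {I J : Finset V} {l : HStar V}
    (hl : ∀ α ∈ S.Δ, ∃ n : ℤ, 0 ≤ n ∧ l (coroot α) = (n : ℂ))
    (hJ : singSet S l = PhiI S J) {x y : V ≃ₗ[ℝ] V}
    (hx : x ∈ doubleCoset S I J) (hy : y ∈ doubleCoset S I J) {β : V} (hβ : β ∈ S.Φ) :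
    (∃ w ∈ weyl (PhiI S I), ∃ v ∈ weyl (PhiI S J), w * (reflV β * x) = y * v ∧
      IsRegularOn (PhiI S I) (sRefl β (wAct x l)) ∧
      sgnW S (PhiI S I) (sRefl β (wAct x l)) (wAct y l) = sg S w) ∨
    ((¬ ∃ w ∈ weyl (PhiI S I), ∃ v ∈ weyl (PhiI S J), w * (reflV β * x) = y * v) ∧
      sgnW S (PhiI S I) (sRefl β (wAct x l)) (wAct y l) = 0) := by
  have hβ0 := S.ne_zero β hβ
  have hreg := dc_regular S hJ hy
  by_cases h : IsRegularOn (PhiI S I) (sRefl β (wAct x l)) ∧ IsRegularOn (PhiI S I) (wAct y l) ∧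
      ∃ w, w ∈ weyl (PhiI S I) ∧ wAct y l = wAct w (sRefl β (wAct x l))
  · left
    have hs := h.2.2.choose_spec
    refine ⟨h.2.2.choose, hs.1, y⁻¹ * (h.2.2.choose * (reflV β * x)), ?_, ?_, h.1, ?_⟩
    · apply stab S l J hl hJ
      · exact mul_mem (inv_mem hy.1) (mul_mem (weyl_mono (PhiI_sub S I) hs.1)
          (mul_mem (weyl_refl_mem hβ) hx.1))
      · rw [← wAct_mul, ← wAct_mul, ← wAct_mul, ← sRefl_eq hβ0, ← hs.2, wAct_mul, inv_mul_cancel,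
          wAct_one]
    · group
    · rw [sgnW, dif_pos h]; rfl
  · right
    refine ⟨?_, by rw [sgnW, dif_neg h]⟩
    rintro ⟨w, hw, v, hv, e⟩
    apply h
    have hvl : wAct v l = l := by
      clear e
      induction hv using Subgroup.closure_induction with
      | mem x hx =>
        obtain ⟨α, hα, rfl⟩ := hx
        have hα0 := S.ne_zero α hα.1
        rw [← hJ] at hα
        rw [← sRefl_eq hα0, sRefl, (l_coroot_zero l hα0).2 hα.2]
        simp
      | one => rfl
      | mul x y _ _ hx hy => rw [← wAct_mul, hy, hx]
      | inv x _ hx =>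
        conv_lhs => rw [← hx]
        rw [wAct_mul, inv_mul_cancel, wAct_one]
    have e1 : wAct y l = wAct w (sRefl β (wAct x l)) := by
      rw [sRefl_eq hβ0, wAct_mul, wAct_mul, mul_assoc, e, ← wAct_mul, hvl]
    exact ⟨regular_of_eq S hw e1 hreg, hreg, w, hw, e1⟩

lemma PsiP_iff {I J : Finset V} {l : HStar V}
    (hl : ∀ α ∈ S.Δ, ∃ n : ℤ, 0 ≤ n ∧ l (coroot α) = (n : ℂ))
    (hJ : singSet S l = PhiI S J) {x : V ≃ₗ[ℝ] V} (hx : x ∈ weyl (S.Φ : Set V)) (β : V) :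
    β ∈ PsiP S (PhiI S I) (S.Φ : Set V) (wAct x l) ↔
      (β ∈ S.pos ∧ β ∉ PhiI S I) ∧ (x⁻¹ β ∈ S.pos ∧ x⁻¹ β ∉ PhiI S J) := by
  have hxi := inv_mem hx
  have key : β ∈ S.Φ → (IsPosInt (wAct x l (coroot β)) ↔
      x⁻¹ β ∈ S.pos ∧ x⁻¹ β ∉ PhiI S J) := by
    intro h
    rw [wAct_apply, ← coroot_map (weyl_isom (fun α h => S.ne_zero α h) hxi)]
    exact posInt_iff S l J hl hJ ((map_root S hxi β).2 h)
  constructor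
  · rintro ⟨⟨h1, h2⟩, h3, h4⟩
    exact ⟨⟨h2, h3⟩, (key h1).1 h4⟩
  · rintro ⟨⟨h2, h3⟩, h4⟩
    exact ⟨⟨S.pos_subset h2, h2⟩, h3, (key (S.pos_subset h2)).2 h4⟩

/-- Without the regularity condition the sum defining the Jantzen coefficient is unchanged. -/
lemma jc_eq {I J : Finset V} {l : HStar V}
    (hl : ∀ α ∈ S.Δ, ∃ n : ℤ, 0 ≤ n ∧ l (coroot α) = (n : ℂ))
    (hJ : singSet S l = PhiI S J) {x y : V ≃ₗ[ℝ] V}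
    (hx : x ∈ doubleCoset S I J) (hy : y ∈ doubleCoset S I J) :
    jc S (PhiI S I) (S.Φ : Set V) (wAct x l) (wAct y l) =
      ∑ᶠ β ∈ PsiP S (PhiI S I) (S.Φ : Set V) (wAct x l),
        sgnW S (PhiI S I) (sRefl β (wAct x l)) (wAct y l) := by
  unfold jc
  apply finsum_mem_inter_support_eq'
  intro β hβ
  constructor
  · exact fun h => h.1
  · intro h
    refine ⟨h, ?_⟩
    rcases sgnW_spec S hl hJ hx hy (S.pos_subset h.1.2) with ⟨w, hw, v, hv, _, hr, _⟩ | ⟨_, h0⟩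
    · exact hr
    · exact absurd h0 hβ

lemma jc_dual (I J : Finset V) (lam mu : HStar V)
    (hlamdom : ∀ α ∈ S.Δ, ∃ n : ℤ, 0 ≤ n ∧ lam (coroot α) = (n : ℂ))
    (hmudom : ∀ α ∈ S.Δ, ∃ n : ℤ, 0 ≤ n ∧ mu (coroot α) = (n : ℂ))
    (hlamJ : singSet S lam = PhiI S J)
    (hmuI : singSet S mu = PhiI S I)
    (x y : V ≃ₗ[ℝ] V) (hx : x ∈ doubleCoset S I J) (hy : y ∈ doubleCoset S I J) :
    jc S (PhiI S I) (S.Φ : Set V) (wAct x lam) (wAct y lam) =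
      (-1 : ℤ) ^ (len S x + len S y + 1) *
        jc S (PhiI S J) (S.Φ : Set V) (wAct x⁻¹ mu) (wAct y⁻¹ mu) := by
  have hxi := dc_inv S hx
  have hyi := dc_inv S hy
  rw [jc_eq S hlamdom hlamJ hx hy, jc_eq S hmudom hmuI hxi hyi]
  have hfin : (PsiP S (PhiI S J) (S.Φ : Set V) (wAct x⁻¹ mu)).Finite :=
    S.Φ.finite_toSet.subset fun β h => h.1.1
  rw [← smul_eq_mul, smul_finsum_mem hfin]
  refine finsum_mem_eq_of_bijOn (fun β => x⁻¹ β) ⟨?_, ?_, ?_⟩ ?_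
  · intro β hβ
    rw [PsiP_iff S hlamdom hlamJ hx.1] at hβ
    rw [PsiP_iff S hmudom hmuI hxi.1, inv_inv, apply_inv_self']
    exact ⟨hβ.2, hβ.1⟩
  · exact (x⁻¹).injective.injOn
  · intro γ hγ
    rw [PsiP_iff S hmudom hmuI hxi.1, inv_inv] at hγ
    refine ⟨x γ, ?_, inv_apply_self' x γ⟩
    rw [PsiP_iff S hlamdom hlamJ hx.1, inv_apply_self']
    exact ⟨hγ.2, hγ.1⟩
  · intro β hβ
    have hβΦ : β ∈ S.Φ := hβ.1.1
    have hγΦ : x⁻¹ β ∈ S.Φ := (map_root S hxi.1 β).2 hβΦ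
    have hconj : reflV (x⁻¹ β) * x⁻¹ = x⁻¹ * reflV β :=
      reflV_conj' (weyl_isom (fun α h => S.ne_zero α h) hxi.1) (S.ne_zero _ hβΦ)
    have hinv := reflV_inv (S.ne_zero _ hβΦ)
    -- translation between the two conditions
    have tr : ∀ w v : V ≃ₗ[ℝ] V, w * (reflV β * x) = y * v ↔
        v * (reflV (x⁻¹ β) * x⁻¹) = y⁻¹ * w := by
      intro w v
      rw [hconj]
      constructor
      · intro h
        have : v = y⁻¹ * (w * (reflV β * x)) := by rw [h]; group
        rw [this]
        calc _ = y⁻¹ * w * (reflV β * reflV β) := by group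
          _ = _ := by rw [reflV_mul_self (S.ne_zero _ hβΦ), mul_one]
      · intro h
        have : w = y * (v * (x⁻¹ * reflV β)) := by rw [h]; group
        rw [this]
        calc _ = y * v * x⁻¹ * (reflV β * reflV β) * x := by group
          _ = _ := by rw [reflV_mul_self (S.ne_zero _ hβΦ)]; group
    rcases sgnW_spec S hlamdom hlamJ hx hy hβΦ with ⟨w, hw, v, hv, e, _, hs⟩ | ⟨hn, hs⟩
    · rcases sgnW_spec S hmudom hmuI hxi hyi hγΦ with ⟨v', hv', w', hw', e', _, hs'⟩ | ⟨hn', hs'⟩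
      · rw [hs, hs']
        have e'' := (tr w' v').2 e'
        rw [sg_unique S hy hw hw' hv hv' e e'']
        have hw'Φ := weyl_mono (PhiI_sub S I) hw'
        have hv'Φ := weyl_mono (PhiI_sub S J) hv'
        have h1 := congrArg (sg S) e''
        rw [sg_mul S hw'Φ (mul_mem (weyl_refl_mem hβΦ) hx.1),
          sg_mul S (weyl_refl_mem hβΦ) hx.1, sg_mul S hy.1 hv'Φ, sg_refl S hβΦ] at h1
        have h2 : (-1 : ℤ) ^ (len S x + len S y + 1) = - (sg S x * sg S y) := by
          rw [sg, sg, pow_succ, pow_add]; ring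
        rw [h2, smul_eq_mul]
        have hxx := sg_sq S x
        calc sg S w' = -(sg S w' * (-1 * sg S x)) * sg S x := by linear_combination (-sg S w') * hxx
          _ = _ := by rw [h1]; ring
      · exact absurd ⟨v, hv, w, hw, (tr w v).1 e⟩ hn'
    · rcases sgnW_spec S hmudom hmuI hxi hyi hγΦ with ⟨v', hv', w', hw', e', _, hs'⟩ | ⟨hn', hs'⟩
      · exact absurd ⟨w', hw', v', hv', (tr w' v').2 e'⟩ hn
      · rw [hs, hs', smul_zero]

end RS

/-- Lemma 4.10 (Dual invariance): let `λ`, `μ` be dominant integral weights with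
`Φ_λ = Φ_J` and `Φ_μ = Φ_I`.  Then for all `x, y ∈ ᴵWᴶ`,
`c̃(xλ, yλ, Φ_I, Φ) = (-1)^{ℓ(x)+ℓ(y)+1} c̃(x⁻¹μ, y⁻¹μ, Φ_J, Φ)`. -/
theorem statement_9 {V : Type*} [NormedAddCommGroup V] [InnerProductSpace ℝ V]
    [FiniteDimensional ℝ V]
    (S : RootSys V) (I J : Finset V) (hI : I ⊆ S.Δ) (hJ : J ⊆ S.Δ)
    (lam mu : HStar V)
    (hlamdom : ∀ α ∈ S.Δ, ∃ n : ℤ, 0 ≤ n ∧ lam (coroot α) = (n : ℂ))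
    (hmudom : ∀ α ∈ S.Δ, ∃ n : ℤ, 0 ≤ n ∧ mu (coroot α) = (n : ℂ))
    (hlamJ : singSet S lam = PhiI S J)
    (hmuI : singSet S mu = PhiI S I)
    (x y : V ≃ₗ[ℝ] V) (hx : x ∈ doubleCoset S I J) (hy : y ∈ doubleCoset S I J) :
    jcSym S (PhiI S I) (S.Φ : Set V) (wAct x lam) (wAct y lam) =
      (-1 : ℤ) ^ (len S x + len S y + 1) *
        jcSym S (PhiI S J) (S.Φ : Set V) (wAct x⁻¹ mu) (wAct y⁻¹ mu) := by
  unfold jcSym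
  rw [jc_dual S I J lam mu hlamdom hmudom hlamJ hmuI x y hx hy,
    jc_dual S I J lam mu hlamdom hmudom hlamJ hmuI y x hy hx, add_comm (len S y) (len S x)]
  ring

end JantzenGVM
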